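/- arXiv:1907.05258 — 4 statements merged into one kernel-verified Lean document; each statement's English description precedes it below -/
import Mathlib

section
/- Let k, l ≥ 0 and let f : ℝᵏ × ℝˡ → ℝ be infinitely differentiable (C^∞) with f(x, 0) = 0 for all x ∈ ℝᵏ. Define g : ℝᵏ × ℝˡ × ℝ → ℝ by g(x, v, t) = f(x, t·v)/t for t ≠ 0, and g(x, v, 0) = (Df(x,0))(0, v), the Fréchet derivative of f at (x,0) applied to the vector (0,v). Then g is infinitely differentiable (C^∞) on all of ℝᵏ × ℝˡ × ℝ. -/
/-- Smooth dependence of an integral over `[0,1]` on a parameter. -/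
theorem contDiff_param_integral {E : Type} [NormedAddCommGroup E] [NormedSpace ℝ E]
    [ProperSpace E] (n : ℕ) :
    ∀ {G : Type} [NormedAddCommGroup G] [NormedSpace ℝ G] (F : E × ℝ → G),
      ContDiff ℝ n F → ContDiff ℝ n (fun x => ∫ s in (0:ℝ)..1, F (x, s)) := by
  induction n with
  | zero =>
    intro G _ _ F hF
    rw [Nat.cast_zero, contDiff_zero] at *
    exact intervalIntegral.continuous_parametric_intervalIntegral_of_continuous'
      (f := fun x s => F (x, s)) hF 0 1
  | succ n ih =>
    intro G _ _ F hF
    push_cast at hF ⊢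
    obtain ⟨F', hF', hd⟩ := contDiff_succ_iff_hasFDerivAt.1 hF
    rw [contDiff_succ_iff_hasFDerivAt]
    have hc : ContDiff ℝ n (fun p => (F' p).comp (ContinuousLinearMap.inl ℝ E ℝ)) :=
      hF'.clm_comp contDiff_const
    refine ⟨_, ih _ hc, fun x₀ => ?_⟩
    have hcc := hc.continuous
    have hFc := hF.continuous
    obtain ⟨C, hC⟩ := ((isCompact_closedBall x₀ 1).prod
      (isCompact_Icc (a := (0:ℝ)) (b := 1))).exists_bound_of_continuousOn hcc.continuousOn
    refine intervalIntegral.hasFDerivAt_integral_of_dominated_of_fderiv_le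
      (F := fun x s => F (x, s))
      (F' := fun x s => (F' (x, s)).comp (ContinuousLinearMap.inl ℝ E ℝ))
      (bound := fun _ => C)
      (Metric.closedBall_mem_nhds x₀ one_pos) ?_ ?_ ?_ ?_ ?_ ?_
    · refine Filter.Eventually.of_forall fun x => ?_
      exact (hFc.comp (Continuous.prodMk_right x)).aestronglyMeasurable
    · exact (hFc.comp (Continuous.prodMk_right x₀)).intervalIntegrable _ _
    · exact (hcc.comp (Continuous.prodMk_right x₀)).aestronglyMeasurable
    · refine Filter.Eventually.of_forall fun t ht x hx => ?_
      rw [Set.uIoc_of_le zero_le_one] at ht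
      exact hC (x, t) ⟨hx, ht.1.le, ht.2⟩
    · exact intervalIntegrable_const
    · refine Filter.Eventually.of_forall fun t ht x hx => ?_
      exact (hd (x, t)).comp x (hasFDerivAt_prodMk_left x t)

/-- Local model of the smooth structure on the deformation to the normal cone
`DNC(M, V)` for `M = ℝᵏ × ℝˡ`, `V = ℝᵏ × {0}`: if `f` is smooth and vanishes on `V`,
then `g (x, v, t) = f (x, t v) / t` (for `t ≠ 0`), `g (x, v, 0) = Df (x, 0) (0, v)`,
is smooth. -/
theorem stmt1 (k l : ℕ) (f : (Fin k → ℝ) × (Fin l → ℝ) → ℝ)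
    (hf : ContDiff ℝ (⊤ : ℕ∞) f) (hf0 : ∀ x : Fin k → ℝ, f (x, 0) = 0)
    (g : (Fin k → ℝ) × (Fin l → ℝ) × ℝ → ℝ)
    (hg_ne : ∀ (x : Fin k → ℝ) (v : Fin l → ℝ) (t : ℝ), t ≠ 0 →
      g (x, v, t) = f (x, t • v) / t)
    (hg_zero : ∀ (x : Fin k → ℝ) (v : Fin l → ℝ),
      g (x, v, 0) = fderiv ℝ f (x, 0) (0, v)) :
    ContDiff ℝ (⊤ : ℕ∞) g := by
  have hfd : ContDiff ℝ (⊤ : ℕ∞) (fderiv ℝ f) := (contDiff_infty_iff_fderiv.1 hf).2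
  have hdiff : Differentiable ℝ f := (contDiff_infty_iff_fderiv.1 hf).1
  have hH : ContDiff ℝ (⊤ : ℕ∞) (fun p : ((Fin k → ℝ) × (Fin l → ℝ) × ℝ) × ℝ =>
      fderiv ℝ f (p.1.1, (p.2 * p.1.2.2) • p.1.2.1) (0, p.1.2.1)) := by
    refine ContDiff.clm_apply (hfd.comp ?_) ?_ <;> fun_prop
  have key : g = fun q => ∫ s in (0:ℝ)..1,
      fderiv ℝ f (q.1, (s * q.2.2) • q.2.1) (0, q.2.1) := by
    funext q
    obtain ⟨x, v, t⟩ := q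
    by_cases ht : t = 0
    · subst ht
      simp [hg_zero]
    · rw [hg_ne x v t ht]
      have hder : ∀ s ∈ Set.uIcc (0:ℝ) 1, HasDerivAt (fun s : ℝ => f (x, (s * t) • v) / t)
          (fderiv ℝ f (x, (s * t) • v) (0, v)) s := by
        intro s _
        have h1 : HasDerivAt (fun s : ℝ => (x, (s * t) • v)) ((0 : Fin k → ℝ), t • v) s := by
          refine (hasDerivAt_const s x).prodMk ?_
          simpa using ((hasDerivAt_id s).mul_const t).smul_const v
        have h2 := ((hdiff (x, (s * t) • v)).hasFDerivAt.comp_hasDerivAt s h1).div_const t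
        have h3 : ((0 : Fin k → ℝ), t • v) = t • ((0 : Fin k → ℝ), v) := by simp
        rw [h3, map_smul, smul_eq_mul, mul_div_cancel_left₀ _ ht] at h2
        exact h2
      have hcont : Continuous (fun s : ℝ => fderiv ℝ f (x, (s * t) • v) (0, v)) :=
        hH.continuous.comp (Continuous.prodMk_right (x, v, t))
      have := intervalIntegral.integral_eq_sub_of_hasDerivAt hder (hcont.intervalIntegrable _ _)
      simp only [this]
      simp [hf0]
  rw [key]
  refine contDiff_infty.2 fun n => ?_
  exact contDiff_param_integral n _ (contDiff_infty.1 hH n)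
end

section
/- Let n ≥ 1 and m ∈ ℤ. Let a : ℝⁿ → ℂ be a classical symbol of order m, i.e. a is C^∞ and there is a sequence (a_{m−j})_{j∈ℕ} of C^∞ functions on ℝⁿ∖{0}, with a_{m−j} positively homogeneous of degree m−j, such that for every k ≥ 1 and every i ∈ ℕ there is a constant M with: for all ξ with ‖ξ‖ ≥ 1, the i-th iterated Fréchet derivative of the function ξ ↦ a(ξ) − Σ_{j<k} a_{m−j}(ξ) (computed within the open set {‖ξ‖ > 1/2}) at ξ has norm at most M·‖ξ‖^(m−k−i). Define b : ℝⁿ × ℝ → ℂ by b(ξ, t) = t^m · a(ξ/t) for t > 0, b(ξ, 0) = a_m(ξ) for ξ ≠ 0, and b = 0 elsewhere. Then: (1) b is C^∞ on the set (ℝⁿ∖{0}) × [0, ∞) in the sense of differentiability within this set (ContDiffOn of infinite order); and (2) b(λ·ξ, λ·t) = λ^m · b(ξ, t) for every λ > 0, ξ ≠ 0 and t ≥ 0. -/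
open Set

open Filter Topology in
/-- The rescaled function `t^c G(ξ/t)`, extended by zero to `t ≤ 0`. -/
noncomputable def symS {E F : Type} [NormedAddCommGroup E] [NormedSpace ℝ E]
    [NormedAddCommGroup F] [NormedSpace ℝ F] (c : ℤ) (G : E → F) (x : E × ℝ) : F :=
  if 0 < x.2 then (x.2 ^ c : ℝ) • G (x.2⁻¹ • x.1) else 0

/-- The candidate derivative. -/
noncomputable def symS' {E F : Type} [NormedAddCommGroup E] [NormedSpace ℝ E]
    [NormedAddCommGroup F] [NormedSpace ℝ F] (c : ℤ) (G : E → F) (DG : E → E →L[ℝ] F)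
    (x : E × ℝ) : E × ℝ →L[ℝ] F :=
  (symS (c - 1) DG x).comp (ContinuousLinearMap.fst ℝ E ℝ) +
    (ContinuousLinearMap.snd ℝ E ℝ).smulRight
      ((c : ℝ) • symS (c - 1) G x - symS (c - 2) DG x x.1)

lemma isOpen_symU {E : Type} [NormedAddCommGroup E] :
    IsOpen {x : E × ℝ | x.1 ≠ 0 ∧ x.2 < ‖x.1‖} := by
  apply IsOpen.inter
  · exact isOpen_ne_fun continuous_fst continuous_const
  · exact isOpen_lt continuous_snd continuous_fst.norm

lemma isOpen_symV {E : Type} [NormedAddCommGroup E] :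
    IsOpen {ξ : E | 1 / 2 < ‖ξ‖} := isOpen_lt continuous_const continuous_norm

lemma one_lt_norm_symU {E : Type} [NormedAddCommGroup E] [NormedSpace ℝ E] {x : E × ℝ}
    (ht : 0 < x.2) (hx : x.2 < ‖x.1‖) : 1 < ‖x.2⁻¹ • x.1‖ := by
  rw [norm_smul, norm_inv, Real.norm_of_nonneg ht.le, inv_mul_eq_div, one_lt_div ht]
  exact hx

lemma hasFDerivAt_symS {E F : Type} [NormedAddCommGroup E] [NormedSpace ℝ E]
    [NormedAddCommGroup F] [NormedSpace ℝ F] (c p : ℤ) (hcp : 2 ≤ c - p) (G : E → F)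
    (hG : DifferentiableOn ℝ G {ξ | 1 / 2 < ‖ξ‖}) (M : ℝ)
    (hM : ∀ ξ : E, 1 ≤ ‖ξ‖ → ‖G ξ‖ ≤ M * ‖ξ‖ ^ p)
    (x : E × ℝ) (hx0 : x.1 ≠ 0) (hx : x.2 < ‖x.1‖) :
    HasFDerivAt (symS c G) (symS' c G (fderivWithin ℝ G {ξ | 1 / 2 < ‖ξ‖}) x) x := by
  rcases lt_trichotomy x.2 0 with ht | ht | ht
  · have h1 : symS' c G (fderivWithin ℝ G {ξ | 1 / 2 < ‖ξ‖}) x = 0 := by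
      ext v <;> simp [symS', symS, not_lt.2 ht.le]
    rw [h1]
    have h2 : symS c G =ᶠ[nhds x] fun _ => 0 := by
      filter_upwards [(isOpen_Iio.preimage continuous_snd).mem_nhds (show x ∈ Prod.snd ⁻¹' Iio (0:ℝ) from ht)] with y hy
      have hy' : y.2 < 0 := hy
      simp [symS, not_lt.2 hy'.le]
    exact (hasFDerivAt_const (0:F) x).congr_of_eventuallyEq h2
  · have h1 : symS' c G (fderivWithin ℝ G {ξ | 1 / 2 < ‖ξ‖}) x = 0 := by
      ext v <;> simp [symS', symS, ht]
    rw [h1]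
    have hcont : ContinuousAt (fun y : E × ℝ => M * ‖y.1‖ ^ p) x := by
      apply continuousAt_const.mul
      exact (continuous_fst.norm.continuousAt).zpow₀ p (Or.inl (by simpa using hx0))
    obtain ⟨C, hC⟩ : ∃ C, M * ‖x.1‖ ^ p < C := exists_gt _
    have hbd : symS c G =O[nhds x] fun y => ‖y - x‖ ^ 2 := by
      apply Asymptotics.IsBigO.of_bound (max C 0)
      filter_upwards [hcont.eventually (gt_mem_nhds hC), isOpen_symU.mem_nhds (show x ∈ {x : E × ℝ | x.1 ≠ 0 ∧ x.2 < ‖x.1‖} from ⟨hx0, hx⟩),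
        (isOpen_Iio.preimage continuous_snd).mem_nhds (show x ∈ Prod.snd ⁻¹' Iio (1:ℝ) from by simp [ht])] with y hyC hyU hy1
      have hy1' : y.2 < 1 := hy1
      by_cases hy : 0 < y.2
      · have h3 : ‖symS c G y‖ ≤ y.2 ^ c * (M * ‖y.2⁻¹ • y.1‖ ^ p) := by
          simp only [symS, hy, if_true]
          rw [norm_smul, Real.norm_of_nonneg (zpow_pos hy c).le]
          gcongr
          exact hM _ (one_lt_norm_symU hy hyU.2).le
        have h4 : y.2 ^ c * (M * ‖y.2⁻¹ • y.1‖ ^ p) = (M * ‖y.1‖ ^ p) * y.2 ^ (c - p) := by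
          rw [norm_smul, norm_inv, Real.norm_of_nonneg hy.le, mul_zpow, inv_zpow, zpow_sub₀ hy.ne']
          field_simp
        have h5 : y.2 ^ (c - p) ≤ y.2 ^ (2:ℤ) := zpow_le_zpow_right_of_le_one₀ hy hy1'.le hcp
        have h6 : y.2 ≤ ‖y - x‖ := by
          have := norm_snd_le (y - x)
          rw [Prod.snd_sub, ht, sub_zero, Real.norm_of_nonneg hy.le] at this
          exact this
        rw [h4] at h3
        refine h3.trans ?_
        rw [norm_pow, norm_norm]
        have h7 : y.2 ^ (2:ℤ) ≤ ‖y - x‖ ^ 2 := by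
          rw [show (2:ℤ) = ((2:ℕ):ℤ) from rfl, zpow_natCast]
          gcongr
        exact mul_le_mul (hyC.le.trans (le_max_left _ _)) (h5.trans h7) (zpow_pos hy _).le (le_max_right _ _)
      · simp only [symS, hy, if_false, norm_zero]
        positivity
    exact hbd.hasFDerivAt (by norm_num)
  · have hz := one_lt_norm_symU ht hx
    have hzV : x.2⁻¹ • x.1 ∈ {ξ : E | 1 / 2 < ‖ξ‖} := by
      show 1 / 2 < ‖x.2⁻¹ • x.1‖
      linarith
    have hGd : HasFDerivAt G (fderivWithin ℝ G {ξ | 1 / 2 < ‖ξ‖} (x.2⁻¹ • x.1)) (x.2⁻¹ • x.1) :=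
      (hG _ hzV).hasFDerivWithinAt.hasFDerivAt (isOpen_symV.mem_nhds hzV)
    have h2 : symS c G =ᶠ[nhds x] fun y => (y.2 ^ c : ℝ) • G (y.2⁻¹ • y.1) := by
      filter_upwards [(isOpen_Ioi.preimage continuous_snd).mem_nhds (show x ∈ Prod.snd ⁻¹' Ioi (0:ℝ) from ht)] with y hy
      have hy' : 0 < y.2 := hy
      simp [symS, hy']
    refine HasFDerivAt.congr_of_eventuallyEq ?_ h2
    have hs : HasFDerivAt (fun y : E × ℝ => y.2) (ContinuousLinearMap.snd ℝ E ℝ) x := hasFDerivAt_snd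
    have hf : HasFDerivAt (fun y : E × ℝ => y.1) (ContinuousLinearMap.fst ℝ E ℝ) x := hasFDerivAt_fst
    have hinv := (hasDerivAt_inv ht.ne').comp_hasFDerivAt x hs
    have hpow := (hasDerivAt_zpow c x.2 (Or.inl ht.ne')).comp_hasFDerivAt x hs
    have hin := hinv.smul hf
    have hfin := hpow.smul (HasFDerivAt.comp x hGd hin)
    refine hfin.congr_fderiv ?_
    set D := fderivWithin ℝ G {ξ | 1 / 2 < ‖ξ‖} (x.2⁻¹ • x.1) with hD
    have e1 : x.2 ^ c = x.2 ^ (c - 1) * x.2 := by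
      rw [← zpow_add_one₀ ht.ne']; congr 1; ring
    have e2 : x.2 ^ (c - 1) = x.2 ^ (c - 2) * x.2 := by
      rw [← zpow_add_one₀ ht.ne']; congr 1; ring
    have hx2 := ht.ne'
    rw [one_div] at hD
    ext v
    · simp [symS', symS, ht, e1, smul_smul]
      rw [← hD]
      congr 1
      field_simp
    · simp [symS', symS, ht, e1, e2, smul_smul]
      rw [← hD, neg_add_eq_sub]
      congr 2
      field_simp

lemma contDiffOn_symS {E : Type} [NormedAddCommGroup E] [NormedSpace ℝ E] (N : ℕ) :
    ∀ {F : Type} [NormedAddCommGroup F] [NormedSpace ℝ F] (c p : ℤ) (_ : N + 2 ≤ c - p) (G : E → F)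
    (_ : ContDiffOn ℝ (⊤ : ℕ∞) G {ξ | 1 / 2 < ‖ξ‖})
    (_ : ∀ i : ℕ, ∃ M : ℝ, ∀ ξ : E, 1 ≤ ‖ξ‖ →
      ‖iteratedFDerivWithin ℝ i G {ξ | 1 / 2 < ‖ξ‖} ξ‖ ≤ M * ‖ξ‖ ^ (p - i)),
    ContDiffOn ℝ N (symS c G) {x : E × ℝ | x.1 ≠ 0 ∧ x.2 < ‖x.1‖} := by
  induction N with
  | zero =>
    intro F _ _ c p hcp G hG hM
    obtain ⟨M, hM⟩ := hM 0
    simp only [norm_iteratedFDerivWithin_zero, Nat.cast_zero, sub_zero] at hM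
    rw [Nat.cast_zero, contDiffOn_zero]
    intro x hx
    exact (hasFDerivAt_symS c p (by simpa using hcp) G (hG.differentiableOn (by simp)) M hM x hx.1 hx.2).continuousAt.continuousWithinAt
  | succ N ih =>
    intro F _ _ c p hcp G hG hM
    push_cast at hcp
    obtain ⟨M, hM0⟩ := hM 0
    simp only [norm_iteratedFDerivWithin_zero, Nat.cast_zero, sub_zero] at hM0
    have hDG : ContDiffOn ℝ (⊤ : ℕ∞) (fderivWithin ℝ G {ξ | 1 / 2 < ‖ξ‖}) {ξ | 1 / 2 < ‖ξ‖} :=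
      hG.fderivWithin isOpen_symV.uniqueDiffOn (by simp)
    have hMD : ∀ i : ℕ, ∃ M : ℝ, ∀ ξ : E, 1 ≤ ‖ξ‖ →
      ‖iteratedFDerivWithin ℝ i (fderivWithin ℝ G {ξ | 1 / 2 < ‖ξ‖}) {ξ | 1 / 2 < ‖ξ‖} ξ‖
        ≤ M * ‖ξ‖ ^ (p - 1 - i) := by
      intro i
      obtain ⟨M, hM⟩ := hM (i + 1)
      refine ⟨M, fun ξ hξ => ?_⟩
      have := hM ξ hξ
      rw [← norm_iteratedFDerivWithin_fderivWithin isOpen_symV.uniqueDiffOn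
        (show 1 / 2 < ‖ξ‖ by linarith)] at this
      rw [show p - 1 - (i : ℤ) = p - ((i + 1 : ℕ) : ℤ) by push_cast; ring]
      exact this
    have k1 := ih (c - 1) (p - 1) (by omega) _ hDG hMD
    have k2 := ih (c - 1) p (by omega) G hG hM
    have k3 := ih (c - 2) (p - 1) (by omega) _ hDG hMD
    have hd : ∀ x ∈ {x : E × ℝ | x.1 ≠ 0 ∧ x.2 < ‖x.1‖}, HasFDerivAt (symS c G) (symS' c G (fderivWithin ℝ G {ξ | 1 / 2 < ‖ξ‖}) x) x :=
      fun x hx => hasFDerivAt_symS c p (by omega) G (hG.differentiableOn (by simp)) M hM0 x hx.1 hx.2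
    rw [Nat.cast_add, Nat.cast_one, contDiffOn_succ_iff_fderiv_of_isOpen isOpen_symU]
    refine ⟨fun x hx => (hd x hx).differentiableAt.differentiableWithinAt, by simp, ?_⟩
    refine ContDiffOn.congr ?_ (fun x hx => (hd x hx).fderiv)
    unfold symS'
    refine ContDiffOn.add (k1.clm_comp contDiffOn_const) ?_
    exact contDiffOn_const.smulRight ((k2.const_smul (c : ℝ)).sub (k3.clm_apply contDiffOn_fst))

/-- A classical symbol `a` of integer order `m`, with asymptotic expansion
`a ∼ ∑ⱼ a_{m-j}`, gives rise to a function `b (ξ, t) = t^m a (ξ / t)` (for `t > 0`),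
`b (ξ, 0) = aₘ ξ` (for `ξ ≠ 0`), `b = 0` elsewhere, which is smooth on
`(ℝⁿ \ {0}) × [0, ∞)` and homogeneous: `b (λ ξ, λ t) = λ^m b (ξ, t)`. -/
theorem stmt3 (n : ℕ) (hn : 1 ≤ n) (m : ℤ)
    (a : EuclideanSpace ℝ (Fin n) → ℂ) (ha : ContDiff ℝ (⊤ : ℕ∞) a)
    (asym : ℕ → EuclideanSpace ℝ (Fin n) → ℂ)
    (hasym_smooth : ∀ j : ℕ, ContDiffOn ℝ (⊤ : ℕ∞) (asym j) {ξ | ξ ≠ 0})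
    (hasym_hom : ∀ j : ℕ, ∀ t : ℝ, 0 < t → ∀ ξ : EuclideanSpace ℝ (Fin n), ξ ≠ 0 →
      asym j (t • ξ) = (t ^ ((m : ℝ) - j) : ℝ) • asym j ξ)
    (hbound : ∀ k : ℕ, 1 ≤ k → ∀ i : ℕ, ∃ M : ℝ,
      ∀ ξ : EuclideanSpace ℝ (Fin n), 1 ≤ ‖ξ‖ →
        ‖iteratedFDerivWithin ℝ i (fun ξ => a ξ - ∑ j ∈ Finset.range k, asym j ξ)
            {ξ : EuclideanSpace ℝ (Fin n) | 1 / 2 < ‖ξ‖} ξ‖ ≤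
          M * ‖ξ‖ ^ ((m : ℝ) - k - i))
    (b : EuclideanSpace ℝ (Fin n) × ℝ → ℂ)
    (hb_pos : ∀ (ξ : EuclideanSpace ℝ (Fin n)) (t : ℝ), 0 < t →
      b (ξ, t) = (t ^ m : ℝ) • a (t⁻¹ • ξ))
    (hb_zero : ∀ ξ : EuclideanSpace ℝ (Fin n), ξ ≠ 0 → b (ξ, 0) = asym 0 ξ)
    (hb_neg : ∀ (ξ : EuclideanSpace ℝ (Fin n)) (t : ℝ), t < 0 → b (ξ, t) = 0)
    (hb_origin : b (0, 0) = 0) :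
    ContDiffOn ℝ (⊤ : ℕ∞) b ({ξ : EuclideanSpace ℝ (Fin n) | ξ ≠ 0} ×ˢ Ici (0 : ℝ)) ∧
    (∀ lam : ℝ, 0 < lam → ∀ ξ : EuclideanSpace ℝ (Fin n), ξ ≠ 0 → ∀ t : ℝ, 0 ≤ t →
      b (lam • ξ, lam * t) = (lam ^ m : ℝ) • b (ξ, t)) := by
  refine ⟨?_, ?_⟩
  · rw [contDiffOn_infty]
    intro N x hx
    have hx1 : x.1 ≠ 0 := hx.1
    have hx2 : 0 ≤ x.2 := hx.2
    rcases hx2.eq_or_lt with ht | ht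
    · set G : EuclideanSpace ℝ (Fin n) → ℂ := fun ξ => a ξ - ∑ j ∈ Finset.range (N + 2), asym j ξ with hGdef
      have hG : ContDiffOn ℝ (⊤ : ℕ∞) G {ξ | 1 / 2 < ‖ξ‖} := by
        refine ha.contDiffOn.sub (ContDiffOn.sum fun j _ => (hasym_smooth j).mono ?_)
        intro ξ hξ h0
        have hξ' : 1 / 2 < ‖ξ‖ := hξ
        rw [h0, norm_zero] at hξ'
        norm_num at hξ'
      have hS := contDiffOn_symS N m (m - ((N + 2 : ℕ) : ℤ)) (by push_cast; omega) G hG (by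
        intro i
        obtain ⟨M, hM⟩ := hbound (N + 2) (by omega) i
        refine ⟨M, fun ξ hξ => ?_⟩
        have := hM ξ hξ
        rw [← Real.rpow_intCast]
        push_cast at this ⊢
        exact this)
      have hxU : x ∈ {x : EuclideanSpace ℝ (Fin n) × ℝ | x.1 ≠ 0 ∧ x.2 < ‖x.1‖} :=
        ⟨hx1, by rw [← ht]; exact norm_pos_iff.2 hx1⟩
      have hSx : ContDiffAt ℝ N (symS m G) x := hS.contDiffAt (isOpen_symU.mem_nhds hxU)
      have hsum : ContDiffAt ℝ N (fun y : EuclideanSpace ℝ (Fin n) × ℝ =>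
          ∑ j ∈ Finset.range (N + 2), (y.2 ^ j : ℝ) • asym j y.1) x := by
        refine ContDiffAt.sum fun j _ => ?_
        refine (contDiffAt_snd.pow j).smul ?_
        have h1 : ContDiffAt ℝ N (asym j) x.1 :=
          ((hasym_smooth j).contDiffAt (isOpen_ne.mem_nhds hx1)).of_le (by exact_mod_cast le_top)
        exact h1.comp x contDiffAt_fst
      have key : ∀ y ∈ ({ξ : EuclideanSpace ℝ (Fin n) | ξ ≠ 0} ×ˢ Ici (0 : ℝ)),
          b y = (∑ j ∈ Finset.range (N + 2), (y.2 ^ j : ℝ) • asym j y.1) + symS m G y := by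
        rintro ⟨ξ, t⟩ ⟨hξ, htt⟩
        have hξ' : ξ ≠ 0 := hξ
        have htt' : 0 ≤ t := htt
        rcases htt'.eq_or_lt with h0 | h0
        · subst h0
          rw [hb_zero ξ hξ', Finset.sum_range_succ']
          simp [symS]
        · rw [hb_pos ξ t h0]
          simp only [symS, h0, if_true, hGdef, smul_sub, Finset.smul_sum]
          have : ∀ j ∈ Finset.range (N + 2), (t ^ m : ℝ) • asym j (t⁻¹ • ξ) = (t ^ j : ℝ) • asym j ξ := by
            intro j _
            rw [hasym_hom j t⁻¹ (inv_pos.2 h0) ξ hξ', smul_smul]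
            congr 1
            rw [Real.inv_rpow h0.le, ← Real.rpow_neg h0.le, ← Real.rpow_intCast, ← Real.rpow_add h0,
              ← Real.rpow_natCast]
            congr 1
            ring
          rw [Finset.sum_congr rfl this]
          abel
      exact (hsum.add hSx).contDiffWithinAt.congr key (key x hx)
    · have h2 : b =ᶠ[nhds x] fun y => (y.2 ^ m : ℝ) • a (y.2⁻¹ • y.1) := by
        filter_upwards [(isOpen_Ioi.preimage continuous_snd).mem_nhds (show x ∈ Prod.snd ⁻¹' Ioi (0:ℝ) from ht)] with y hy
        exact hb_pos y.1 y.2 hy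
      refine ContDiffAt.contDiffWithinAt (ContDiffAt.congr_of_eventuallyEq ?_ h2)
      have hinv : ContDiffAt ℝ N (fun y : EuclideanSpace ℝ (Fin n) × ℝ => y.2⁻¹) x :=
        contDiffAt_snd.inv ht.ne'
      have ha' : ContDiff ℝ N a := ha.of_le (by exact_mod_cast le_top)
      have hp : ContDiffAt ℝ N (fun y : EuclideanSpace ℝ (Fin n) × ℝ => y.2 ^ m) x := by
        cases m with
        | ofNat k => simpa using (contDiffAt_snd (𝕜 := ℝ) (p := x) (n := N)).pow k
        | negSucc k =>
          simp only [zpow_negSucc]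
          exact (contDiffAt_snd.pow (k + 1)).inv (pow_ne_zero _ ht.ne')
      exact hp.smul (ha'.contDiffAt.comp x (hinv.smul contDiffAt_fst))
  · intro lam hl ξ hξ t ht
    rcases ht.eq_or_lt with h0 | h0
    · subst h0
      rw [mul_zero, hb_zero _ (smul_ne_zero hl.ne' hξ), hb_zero _ hξ, hasym_hom 0 lam hl ξ hξ]
      simp
    · rw [hb_pos _ _ (mul_pos hl h0), hb_pos _ _ h0, smul_smul, smul_smul, mul_zpow]
      congr 3
      field_simp
end

section
/- Let p ≥ 1 and let a : ℝᵖ → ℂ be a bounded function that is continuous on ℝᵖ∖{0} and positively homogeneous of degree 0, i.e. a(t·η) = a(η) for all t > 0 and η ≠ 0. Let ξ ∈ ℝᵖ with ξ ≠ 0. Then the limit as n → ∞ (n ranging over positive natural numbers) of ∫_{ℝᵖ} a(η) · n^{−p/2} · exp(−π·‖η − n·ξ‖²/n) dη exists and equals a(ξ). -/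
open MeasureTheory Filter Topology

/-- The Gaussian probability densities `η ↦ n^{-p/2} exp (-π ‖η - n ξ‖² / n)`
concentrate along the direction of `ξ`: for a bounded function `a`, continuous away
from `0` and positively homogeneous of degree `0`, the integrals
`∫ a (η) n^{-p/2} exp (-π ‖η - n ξ‖² / n) dη` tend to `a (ξ)` as `n → ∞`. -/
theorem stmt9 (p : ℕ) (hp : 1 ≤ p) (a : EuclideanSpace ℝ (Fin p) → ℂ)
    (hbdd : ∃ C : ℝ, ∀ η : EuclideanSpace ℝ (Fin p), ‖a η‖ ≤ C)
    (hcont : ContinuousOn a {η : EuclideanSpace ℝ (Fin p) | η ≠ 0})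
    (hhom : ∀ t : ℝ, 0 < t → ∀ η : EuclideanSpace ℝ (Fin p), η ≠ 0 → a (t • η) = a η)
    (ξ : EuclideanSpace ℝ (Fin p)) (hξ : ξ ≠ 0) :
    Tendsto (fun n : ℕ =>
      ∫ η : EuclideanSpace ℝ (Fin p),
        a η * ((((n : ℝ) ^ (-(p : ℝ) / 2) *
          Real.exp (-Real.pi * ‖η - (n : ℝ) • ξ‖ ^ 2 / n) : ℝ)) : ℂ))
      atTop (𝓝 (a ξ)) := by
  obtain ⟨C, hC⟩ := hbdd
  have hmeas : Measurable a := measurable_of_continuousOn_compl_singleton 0 hcont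
  have hca : ContinuousAt a ξ := hcont.continuousAt (isOpen_ne.mem_nhds hξ)
  have hint : ∫ u : EuclideanSpace ℝ (Fin p), Real.exp (-Real.pi * ‖u‖ ^ 2) = 1 := by
    rw [GaussianFourier.integral_rexp_neg_mul_sq_norm Real.pi_pos, div_self Real.pi_ne_zero,
      Real.one_rpow]
  have hintg : Integrable
      (fun u : EuclideanSpace ℝ (Fin p) => Real.exp (-Real.pi * ‖u‖ ^ 2)) := by
    by_contra h
    rw [integral_undef h] at hint
    exact zero_ne_one hint
  have key : ∀ n : ℕ, 1 ≤ n →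
      ∫ η : EuclideanSpace ℝ (Fin p),
        a η * ((((n : ℝ) ^ (-(p : ℝ) / 2) *
          Real.exp (-Real.pi * ‖η - (n : ℝ) • ξ‖ ^ 2 / n) : ℝ)) : ℂ) =
      ∫ u : EuclideanSpace ℝ (Fin p),
        a (Real.sqrt n • u + (n : ℝ) • ξ) * ((Real.exp (-Real.pi * ‖u‖ ^ 2) : ℝ) : ℂ) := by
    intro n hn
    have hn0 : (0 : ℝ) < n := by exact_mod_cast hn
    have hR : 0 < Real.sqrt n := Real.sqrt_pos.2 hn0
    rw [← integral_add_right_eq_self _ ((n : ℝ) • ξ)]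
    have h := Measure.integral_comp_smul_of_nonneg
      (volume : Measure (EuclideanSpace ℝ (Fin p)))
      (fun x : EuclideanSpace ℝ (Fin p) => a (x + (n : ℝ) • ξ) *
        ((((n : ℝ) ^ (-(p : ℝ) / 2) *
          Real.exp (-Real.pi * ‖x + (n : ℝ) • ξ - (n : ℝ) • ξ‖ ^ 2 / n) : ℝ)) : ℂ))
      (Real.sqrt n) (hR := hR.le)
    have hpow : (n : ℝ) ^ (-(p : ℝ) / 2) = (Real.sqrt n ^ p)⁻¹ := by
      rw [Real.sqrt_eq_rpow, ← Real.rpow_natCast, ← Real.rpow_mul hn0.le, ← Real.rpow_neg hn0.le]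
      congr 1
      ring
    have h2 : ∀ x : EuclideanSpace ℝ (Fin p),
        -Real.pi * ‖Real.sqrt n • x + (n : ℝ) • ξ - (n : ℝ) • ξ‖ ^ 2 / n
          = -Real.pi * ‖x‖ ^ 2 := by
      intro x
      rw [add_sub_cancel_right, norm_smul, mul_pow, Real.norm_eq_abs, sq_abs,
        Real.sq_sqrt hn0.le]
      field_simp
    have hne : (((Real.sqrt n ^ p)⁻¹ : ℝ) : ℂ) ≠ 0 := by
      exact_mod_cast (inv_pos.2 (pow_pos hR p)).ne'
    simp only [h2] at h
    rw [finrank_euclideanSpace_fin, Complex.real_smul] at h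
    refine mul_left_cancel₀ hne ?_
    rw [← h, ← integral_const_mul]
    congr 1
    ext x
    rw [hpow, Complex.ofReal_mul]
    ring
  have hlim : Tendsto (fun n : ℕ => ∫ u : EuclideanSpace ℝ (Fin p),
        a (Real.sqrt n • u + (n : ℝ) • ξ) * ((Real.exp (-Real.pi * ‖u‖ ^ 2) : ℝ) : ℂ)) atTop
      (𝓝 (∫ u : EuclideanSpace ℝ (Fin p),
        a ξ * ((Real.exp (-Real.pi * ‖u‖ ^ 2) : ℝ) : ℂ))) := by
    refine tendsto_integral_of_dominated_convergence
      (fun u => C * Real.exp (-Real.pi * ‖u‖ ^ 2)) ?_ (hintg.const_mul C) ?_ ?_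
    · intro n
      have h1 : Measurable (fun u : EuclideanSpace ℝ (Fin p) =>
          a (Real.sqrt n • u + (n : ℝ) • ξ)) := hmeas.comp (by fun_prop)
      exact (h1.mul (by fun_prop)).aestronglyMeasurable
    · intro n
      refine Eventually.of_forall fun u => ?_
      rw [norm_mul, Complex.norm_real, Real.norm_eq_abs, abs_of_pos (Real.exp_pos _)]
      exact mul_le_mul_of_nonneg_right (hC _) (Real.exp_pos _).le
    · refine Eventually.of_forall fun u => ?_
      refine Tendsto.mul_const _ ?_
      have h0 : Tendsto (fun n : ℕ => (Real.sqrt n)⁻¹) atTop (𝓝 0) :=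
        tendsto_inv_atTop_zero.comp
          (Real.tendsto_sqrt_atTop.comp tendsto_natCast_atTop_atTop)
      have h1 : Tendsto (fun n : ℕ => (Real.sqrt n)⁻¹ • u + ξ) atTop (𝓝 ξ) := by
        simpa using (h0.smul_const u).add_const ξ
      refine (hca.tendsto.comp h1).congr' ?_
      filter_upwards [h1.eventually (isOpen_ne.mem_nhds hξ), eventually_ge_atTop 1] with n hn hn1
      have hn0 : (0 : ℝ) < n := by exact_mod_cast hn1
      have hR : 0 < Real.sqrt n := Real.sqrt_pos.2 hn0
      have h3 := hhom n hn0 _ hn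
      rw [Function.comp_apply, ← h3, smul_add, smul_smul]
      congr 3
      rw [← div_eq_mul_inv, Real.div_sqrt]
  have hval : ∫ u : EuclideanSpace ℝ (Fin p),
        a ξ * ((Real.exp (-Real.pi * ‖u‖ ^ 2) : ℝ) : ℂ) = a ξ := by
    rw [integral_const_mul, integral_complex_ofReal, hint]
    simp
  rw [hval] at hlim
  refine hlim.congr' ?_
  filter_upwards [eventually_ge_atTop 1] with n hn
  exact (key n hn).symm
end

section
/- Let n ≥ 1, m ∈ ℝ, and let a : ℝⁿ → ℂ be C^∞ such that for every i ∈ ℕ there is a constant C_i with ‖D^i a(ξ)‖ ≤ C_i·(1 + ‖ξ‖)^{m−i} for all ξ ∈ ℝⁿ, where D^i a denotes the i-th iterated Fréchet derivative. Then there exists a function κ : ℝⁿ → ℂ which is C^∞ on ℝⁿ∖{0}, such that for every C^∞ compactly supported function f : ℝⁿ → ℂ whose support is contained in ℝⁿ∖{0}, the function ξ ↦ a(ξ)·𝓕f(ξ) is integrable and ∫_{ℝⁿ} a(ξ)·𝓕f(ξ) dξ = ∫_{ℝⁿ} κ(x)·f(x) dx. -/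
open MeasureTheory FourierTransform

namespace Conormal

/-- Symbols of order `m`. -/
def Sym {n : ℕ} (m : ℝ) (a : EuclideanSpace ℝ (Fin n) → ℂ) : Prop :=
  ContDiff ℝ (⊤ : ℕ∞) a ∧ ∀ i : ℕ, ∃ C : ℝ, ∀ ξ : EuclideanSpace ℝ (Fin n),
      ‖iteratedFDeriv ℝ i a ξ‖ ≤ C * (1 + ‖ξ‖) ^ (m - i)

variable {n : ℕ} {m : ℝ} {a b : EuclideanSpace ℝ (Fin n) → ℂ}

theorem Sym.add (ha : Sym m a) (hb : Sym m b) : Sym m (fun x => a x + b x) := by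
  refine ⟨ha.1.add hb.1, fun i => ?_⟩
  obtain ⟨C, hC⟩ := ha.2 i
  obtain ⟨C', hC'⟩ := hb.2 i
  refine ⟨C + C', fun ξ => ?_⟩
  have : iteratedFDeriv ℝ i (fun x => a x + b x) ξ
      = iteratedFDeriv ℝ i a ξ + iteratedFDeriv ℝ i b ξ :=
    iteratedFDeriv_add_apply (ha.1.contDiffAt.of_le (by exact_mod_cast le_top))
      (hb.1.contDiffAt.of_le (by exact_mod_cast le_top))
  rw [this, add_mul]
  exact (norm_add_le _ _).trans (add_le_add (hC ξ) (hC' ξ))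

theorem Sym.zero : Sym m (fun _ : EuclideanSpace ℝ (Fin n) => (0 : ℂ)) := by
  refine ⟨contDiff_const, fun i => ⟨0, fun ξ => ?_⟩⟩
  have : iteratedFDeriv ℝ i (fun _ : EuclideanSpace ℝ (Fin n) => (0 : ℂ)) = 0 :=
    iteratedFDeriv_fun_zero
  simp [this]

theorem Sym.sum {ι : Type*} (s : Finset ι) {F : ι → EuclideanSpace ℝ (Fin n) → ℂ}
    (h : ∀ j, Sym m (F j)) : Sym m (fun x => ∑ j ∈ s, F j x) := by
  classical
  induction s using Finset.induction_on with
  | empty => simpa using Sym.zero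
  | insert j s hj ih =>
    simp only [Finset.sum_insert hj]
    exact (h j).add ih

theorem Sym.const_mul (ha : Sym m a) (c : ℂ) : Sym m (fun x => c * a x) := by
  refine ⟨contDiff_const.mul ha.1, fun i => ?_⟩
  obtain ⟨C, hC⟩ := ha.2 i
  refine ⟨‖c‖ * C, fun ξ => ?_⟩
  have : iteratedFDeriv ℝ i (fun x => c * a x) ξ = c • iteratedFDeriv ℝ i a ξ :=
    iteratedFDeriv_const_smul_apply (a := c)
      (ha.1.contDiffAt.of_le (by exact_mod_cast le_top))
  rw [this, norm_smul, mul_assoc]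
  exact mul_le_mul_of_nonneg_left (hC ξ) (norm_nonneg _)

theorem Sym.fderiv (ha : Sym m a) (v : EuclideanSpace ℝ (Fin n)) :
    Sym (m - 1) (fun x => fderiv ℝ a x v) := by
  have h1 : ContDiff ℝ (⊤ : ℕ∞) (_root_.fderiv ℝ a) := ha.1.fderiv_right (by simp)
  refine ⟨h1.clm_apply contDiff_const, fun i => ?_⟩
  obtain ⟨C, hC⟩ := ha.2 (i + 1)
  refine ⟨‖v‖ * C, fun ξ => ?_⟩
  have h2 := norm_iteratedFDeriv_clm_apply_const (c := v) (x := ξ) (n := i) (N := (⊤ : ℕ∞))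
    h1.contDiffAt (by exact_mod_cast le_top)
  refine h2.trans ?_
  rw [norm_iteratedFDeriv_fderiv, mul_assoc]
  have := hC ξ
  push_cast at this
  rw [show m - 1 - (i : ℝ) = m - (i + 1) by ring]
  gcongr

theorem Sym.temperate (ha : Sym m a) : a.HasTemperateGrowth := by
  refine ⟨ha.1, fun i => ?_⟩
  obtain ⟨C, hC⟩ := ha.2 i
  obtain ⟨k, hk⟩ := exists_nat_ge m
  refine ⟨k, |C|, fun ξ => (hC ξ).trans ?_⟩
  have h1 : (1 + ‖ξ‖) ^ (m - i) ≤ (1 + ‖ξ‖) ^ k := by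
    rw [← Real.rpow_natCast]
    apply Real.rpow_le_rpow_of_exponent_le (by simp)
    have : (0 : ℝ) ≤ i := by positivity
    linarith
  have : 0 ≤ (1 + ‖ξ‖) ^ (m - i) := by positivity
  calc _ ≤ |C| * (1 + ‖ξ‖) ^ (m - i) := by gcongr; exact le_abs_self C
    _ ≤ _ := by gcongr

theorem Sym.integrable_pow (ha : Sym m a) (k : ℕ) (h : m + k < -n) :
    Integrable (fun x => ‖x‖ ^ k * ‖a x‖) := by
  obtain ⟨C, hC⟩ := ha.2 0
  have hi := (integrable_one_add_norm (E := EuclideanSpace ℝ (Fin n)) (μ := volume)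
    (r := -(m + k)) (by simp; linarith)).const_mul C
  refine hi.mono' ?_ (Filter.Eventually.of_forall fun x => ?_)
  · have := ha.1.continuous
    exact (by fun_prop : Continuous _).aestronglyMeasurable
  · have := hC x
    simp only [norm_iteratedFDeriv_zero, Nat.cast_zero, sub_zero] at this
    rw [Real.norm_of_nonneg (by positivity), neg_neg, Real.rpow_add (by positivity),
      Real.rpow_natCast]
    calc _ ≤ (1 + ‖x‖) ^ k * ‖a x‖ := by gcongr; simp
      _ ≤ (1 + ‖x‖) ^ k * (C * (1 + ‖x‖) ^ m) := by gcongr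
      _ = _ := by ring

theorem Sym.integrable (ha : Sym m a) (h : m < -n) : Integrable a := by
  have := ha.integrable_pow 0 (by simpa using h)
  simp only [pow_zero, one_mul] at this
  exact (integrable_norm_iff ha.1.continuous.aestronglyMeasurable).1 this

theorem Sym.integrable_fderiv (ha : Sym m a) (h : m - 1 < -n) :
    Integrable (_root_.fderiv ℝ a) := by
  obtain ⟨C, hC⟩ := ha.2 1
  have hi := (integrable_one_add_norm (E := EuclideanSpace ℝ (Fin n)) (μ := volume)
    (r := -(m - 1)) (by simp; linarith)).const_mul C
  refine hi.mono' ?_ (Filter.Eventually.of_forall fun x => ?_)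
  · exact (ha.1.continuous_fderiv (by simp)).aestronglyMeasurable
  · have := hC x
    rw [← norm_iteratedFDeriv_fderiv, norm_iteratedFDeriv_zero] at this
    simpa using this

/-- Normalized directional derivative. -/
noncomputable def dd (v : EuclideanSpace ℝ (Fin n)) (a : EuclideanSpace ℝ (Fin n) → ℂ) :
    EuclideanSpace ℝ (Fin n) → ℂ :=
  fun x => (2 * Real.pi * Complex.I)⁻¹ * fderiv ℝ a x v

theorem Sym.dd (ha : Sym m a) (v : EuclideanSpace ℝ (Fin n)) : Sym (m - 1) (dd v a) :=
  (ha.fderiv v).const_mul _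

theorem fourier_dd (ha : Sym m a) (h : m < -n) (v x : EuclideanSpace ℝ (Fin n)) :
    𝓕 (dd v a) x = (inner ℝ x v : ℝ) * 𝓕 a x := by
  have hf' := ha.integrable_fderiv (by linarith)
  have h1 := Real.fourier_fderiv (ha.integrable h) (ha.1.differentiable (by simp)) hf'
  have h2 : 𝓕 (fun y => fderiv ℝ a y v) x = 𝓕 (fderiv ℝ a) x v := by
    rw [Real.fourier_eq, Real.fourier_eq, ContinuousLinearMap.integral_apply]
    · rfl
    · exact (Real.fourierIntegral_convergent_iff x).2 hf'
  have h3 : 𝓕 (dd v a) x = (2 * Real.pi * Complex.I)⁻¹ * 𝓕 (fun y => fderiv ℝ a y v) x := by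
    rw [Real.fourier_eq, Real.fourier_eq, ← integral_const_mul]
    congr 1
    ext y
    simp only [dd, Circle.smul_def, smul_eq_mul]
    ring
  rw [h3, h2, h1]
  have : (2 * Real.pi * Complex.I) ≠ 0 := Complex.two_pi_I_ne_zero
  have h4 : VectorFourier.fourierSMulRight (-innerSL ℝ) (𝓕 a) x v
      = -(2 * Real.pi * Complex.I) * (((-(inner ℝ x v : ℝ) : ℝ) : ℂ) * 𝓕 a x) := rfl
  rw [h4]
  push_cast
  field_simp

theorem integrable_mul_schwartz (ha : Sym m a) (φ : SchwartzMap (EuclideanSpace ℝ (Fin n)) ℂ) :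
    Integrable (fun x => a x * φ x) := by
  have := (SchwartzMap.smulLeftCLM ℂ a φ).integrable (μ := volume)
  simpa [SchwartzMap.smulLeftCLM_apply ha.temperate] using this

theorem parts_dd (ha : Sym m a) (φ : SchwartzMap (EuclideanSpace ℝ (Fin n)) ℂ)
    (v : EuclideanSpace ℝ (Fin n)) :
    ∫ x, a x * 𝓕 (SchwartzMap.smulLeftCLM ℂ (inner ℝ · v) φ) x = ∫ x, dd v a x * (𝓕 φ) x := by
  have i1 := integrable_mul_schwartz (ha.fderiv v) (𝓕 φ)
  have i2 : Integrable (fun x => a x * fderiv ℝ (𝓕 φ : SchwartzMap _ ℂ) x v) :=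
    integrable_mul_schwartz ha (LineDeriv.lineDerivOp v (𝓕 φ))
  have i3 := integrable_mul_schwartz ha (𝓕 φ)
  have d1 : Differentiable ℝ a := ha.1.differentiable (by simp)
  have d2 : Differentiable ℝ (𝓕 φ : SchwartzMap _ ℂ) := (𝓕 φ).differentiable
  have key := integral_mul_fderiv_eq_neg_fderiv_mul_of_integrable i1 i2 i3
    (fun x _ => d1 x) (fun x _ => d2 x)
  have h1 : ∀ x, fderiv ℝ (𝓕 φ : SchwartzMap _ ℂ) x v = -(2 * Real.pi * Complex.I) *
      𝓕 (SchwartzMap.smulLeftCLM ℂ (inner ℝ · v) φ) x := by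
    intro x
    rw [← SchwartzMap.lineDerivOp_apply_eq_fderiv, SchwartzMap.lineDerivOp_fourier_eq,
      FourierTransform.fourier_smul]
    rfl
  have h0 : (2 * Real.pi * Complex.I) ≠ 0 := Complex.two_pi_I_ne_zero
  simp only [dd, mul_assoc _ (fderiv ℝ a _ v)]
  rw [integral_const_mul, eq_inv_mul_iff_mul_eq₀ h0, ← neg_inj, ← key, ← integral_const_mul,
    ← integral_neg]
  congr 1
  ext x
  rw [h1]
  ring

/-- Normalized Laplacian. -/
noncomputable def lap (a : EuclideanSpace ℝ (Fin n) → ℂ) : EuclideanSpace ℝ (Fin n) → ℂ :=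
  fun x => ∑ j, dd (EuclideanSpace.single j 1) (dd (EuclideanSpace.single j 1) a) x

theorem Sym.lap (ha : Sym m a) : Sym (m - 2) (lap a) := by
  refine Sym.sum _ fun j => ?_
  have := (ha.dd (EuclideanSpace.single j 1)).dd (EuclideanSpace.single j 1)
  rwa [show m - 1 - 1 = m - 2 by ring] at this

theorem Sym.iter (ha : Sym m a) (N : ℕ) : Sym (m - 2 * N) (Conormal.lap^[N] a) := by
  induction N with
  | zero => simpa using ha
  | succ N ih =>
    rw [Function.iterate_succ_apply']
    have := ih.lap
    rwa [show m - 2 * (N + 1 : ℕ) = m - 2 * N - 2 by push_cast; ring]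

theorem fourier_lap (ha : Sym m a) (h : m < -n) (x : EuclideanSpace ℝ (Fin n)) :
    𝓕 (lap a) x = (‖x‖ ^ 2 : ℝ) * 𝓕 a x := by
  have h1 : 𝓕 (lap a) x = ∑ j : Fin n, 𝓕 (dd (EuclideanSpace.single j 1)
      (dd (EuclideanSpace.single j 1) a)) x := by
    simp only [Real.fourier_eq]
    rw [← integral_finsetSum]
    · simp only [lap, Finset.smul_sum]
    · intro j _
      exact (Real.fourierIntegral_convergent_iff x).2
        (((ha.dd _).dd _).integrable (by linarith))
  rw [h1, EuclideanSpace.norm_sq_eq]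
  push_cast
  rw [Finset.sum_mul]
  refine Finset.sum_congr rfl fun j _ => ?_
  rw [fourier_dd (ha.dd _) (by linarith), fourier_dd ha h]
  simp [EuclideanSpace.inner_single_right]
  rw [← Complex.ofReal_pow, sq_abs]
  push_cast
  ring

theorem parts_lap (ha : Sym m a) (φ ψ : SchwartzMap (EuclideanSpace ℝ (Fin n)) ℂ)
    (h : ∀ x, φ x = (‖x‖ ^ 2 : ℝ) * ψ x) :
    ∫ x, a x * (𝓕 φ) x = ∫ x, lap a x * (𝓕 ψ) x := by
  let M : Fin n → SchwartzMap (EuclideanSpace ℝ (Fin n)) ℂ → SchwartzMap _ ℂ := fun j =>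
    SchwartzMap.smulLeftCLM ℂ (inner ℝ · (EuclideanSpace.single j (1 : ℝ)))
  have hM : φ = ∑ j, M j (M j ψ) := by
    ext x
    rw [h, EuclideanSpace.norm_sq_eq, sum_apply]
    push_cast
    rw [Finset.sum_mul]
    refine Finset.sum_congr rfl fun j _ => ?_
    have ht : (inner ℝ · (EuclideanSpace.single j (1 : ℝ))).HasTemperateGrowth :=
      Function.hasTemperateGrowth_inner_left _
    simp only [M, SchwartzMap.smulLeftCLM_apply_apply ht]
    simp [EuclideanSpace.inner_single_right]
    rw [← Complex.ofReal_pow, sq_abs]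
    push_cast
    ring
  have h2 : ∀ x, (𝓕 φ) x = ∑ j, 𝓕 (M j (M j ψ)) x := by
    intro x
    have : 𝓕 φ = ∑ j, 𝓕 (M j (M j ψ)) := by
      rw [hM]
      exact map_sum (FourierTransform.fourierCLM ℂ (SchwartzMap (EuclideanSpace ℝ (Fin n)) ℂ)) _ _
    rw [this, sum_apply]
  simp only [h2, lap, Finset.mul_sum, Finset.sum_mul]
  rw [integral_finsetSum, integral_finsetSum]
  · refine Finset.sum_congr rfl fun j _ => ?_
    rw [parts_dd ha, parts_dd (ha.dd _)]
  · intro j _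
    exact integrable_mul_schwartz ((ha.dd _).dd _) _
  · intro j _
    exact integrable_mul_schwartz ha _

/-- Division of a test function by `|x|^2`. -/
theorem div_test {f : EuclideanSpace ℝ (Fin n) → ℂ} (hf : ContDiff ℝ (⊤ : ℕ∞) f)
    (hs : tsupport f ⊆ {x | x ≠ 0}) :
    ContDiff ℝ (⊤ : ℕ∞) (fun x => ((‖x‖ ^ 2 : ℝ) : ℂ)⁻¹ * f x) := by
  rw [contDiff_iff_contDiffAt]
  intro x
  by_cases hx : x = 0
  · have h0 : x ∉ tsupport f := fun h => hs h hx
    have : f =ᶠ[nhds x] 0 := notMem_tsupport_iff_eventuallyEq.1 h0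
    refine (contDiffAt_const (c := (0 : ℂ))).congr_of_eventuallyEq ?_
    filter_upwards [this] with y hy
    simp [hy]
  · refine ContDiffAt.mul (ContDiffAt.inv ?_ ?_) hf.contDiffAt
    · exact (Complex.ofRealCLM.contDiff.comp (contDiff_norm_sq ℝ)).contDiffAt
    · simpa using hx

theorem parts_iter (N : ℕ) : ∀ {m : ℝ} {a : EuclideanSpace ℝ (Fin n) → ℂ}
    {f : EuclideanSpace ℝ (Fin n) → ℂ}, Sym m a → ContDiff ℝ (⊤ : ℕ∞) f →
    HasCompactSupport f → tsupport f ⊆ {x | x ≠ 0} →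
    ∃ ψ : SchwartzMap (EuclideanSpace ℝ (Fin n)) ℂ,
      (∀ x, ψ x = (((‖x‖ ^ 2 : ℝ) : ℂ)⁻¹) ^ N * f x) ∧
      ∫ x, a x * 𝓕 f x = ∫ x, lap^[N] a x * (𝓕 ψ) x := by
  induction N with
  | zero =>
    intro m a f ha hf hc hs
    exact ⟨hc.toSchwartzMap hf, fun x => by simp, by
      simp only [Function.iterate_zero, id_eq, SchwartzMap.fourier_coe]; rfl⟩
  | succ N ih =>
    intro m a f ha hf hc hs
    have hf' := div_test hf hs
    have hc' : HasCompactSupport (fun x => ((‖x‖ ^ 2 : ℝ) : ℂ)⁻¹ * f x) := hc.mul_left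
    have hs' : tsupport (fun x => ((‖x‖ ^ 2 : ℝ) : ℂ)⁻¹ * f x) ⊆ {x | x ≠ 0} :=
      (tsupport_mul_subset_right).trans hs
    obtain ⟨ψ, h1, h2⟩ := ih ha.lap hf' hc' hs'
    refine ⟨ψ, fun x => by rw [h1]; ring, ?_⟩
    rw [Function.iterate_succ_apply, ← h2]
    have := parts_lap ha (hc.toSchwartzMap hf) (hc'.toSchwartzMap hf') ?_
    · simp only [SchwartzMap.fourier_coe] at this
      exact this
    · intro x
      change f x = _ * (_ * f x)
      by_cases hx : x = 0
      · have : f x = 0 := image_eq_zero_of_notMem_tsupport fun h => hs h hx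
        simp [this]
      · have : ((‖x‖ ^ 2 : ℝ) : ℂ) ≠ 0 := by simpa using hx
        field_simp

/-- The candidate kernels. -/
noncomputable def ker (a : EuclideanSpace ℝ (Fin n) → ℂ) (N : ℕ) :
    EuclideanSpace ℝ (Fin n) → ℂ :=
  fun x => (((‖x‖ ^ 2 : ℝ) : ℂ)⁻¹) ^ N * 𝓕 (lap^[N] a) x

theorem ker_succ (ha : Sym m a) (N : ℕ) (h : m - 2 * N < -n) {x : EuclideanSpace ℝ (Fin n)}
    (hx : x ≠ 0) : ker a (N + 1) x = ker a N x := by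
  have : ((‖x‖ ^ 2 : ℝ) : ℂ) ≠ 0 := by simpa using hx
  rw [ker, ker, Function.iterate_succ_apply', fourier_lap (ha.iter N) h, pow_succ]
  field_simp

theorem ker_add (ha : Sym m a) (N : ℕ) (h : m - 2 * N < -n) {x : EuclideanSpace ℝ (Fin n)}
    (hx : x ≠ 0) (k : ℕ) : ker a (N + k) x = ker a N x := by
  induction k with
  | zero => rfl
  | succ k ih =>
    rw [← ih, ← add_assoc, ker_succ ha _ _ hx]
    push_cast
    have : (0 : ℝ) ≤ k := by positivity
    linarith

theorem ker_contDiffOn (ha : Sym m a) (N k : ℕ) (h : m - 2 * N + k < -n) :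
    ContDiffOn ℝ k (ker a N) {x | x ≠ 0} := by
  intro x hx
  refine ContDiffAt.contDiffWithinAt ?_
  refine ContDiffAt.mul (ContDiffAt.pow (ContDiffAt.inv ?_ ?_) _) ?_
  · exact (Complex.ofRealCLM.contDiff.comp (contDiff_norm_sq ℝ)).contDiffAt
  · simpa using hx
  · refine ContDiff.contDiffAt ?_
    refine Real.contDiff_fourier (N := (k : ℕ∞)) fun j hj => ?_
    refine (ha.iter N).integrable_pow j ?_
    have : (j : ℝ) ≤ k := by exact_mod_cast hj
    linarith

end Conormal

open Conormal in
theorem stmt10 (n : ℕ) (hn : 1 ≤ n) (m : ℝ)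
    (a : EuclideanSpace ℝ (Fin n) → ℂ) (ha : ContDiff ℝ (⊤ : ℕ∞) a)
    (hbound : ∀ i : ℕ, ∃ C : ℝ, ∀ ξ : EuclideanSpace ℝ (Fin n),
      ‖iteratedFDeriv ℝ i a ξ‖ ≤ C * (1 + ‖ξ‖) ^ (m - i)) :
    ∃ κ : EuclideanSpace ℝ (Fin n) → ℂ,
      ContDiffOn ℝ (⊤ : ℕ∞) κ {x : EuclideanSpace ℝ (Fin n) | x ≠ 0} ∧
      ∀ f : EuclideanSpace ℝ (Fin n) → ℂ, ContDiff ℝ (⊤ : ℕ∞) f → HasCompactSupport f →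
        tsupport f ⊆ {x : EuclideanSpace ℝ (Fin n) | x ≠ 0} →
        Integrable (fun ξ => a ξ * 𝓕 f ξ) ∧
        ∫ ξ : EuclideanSpace ℝ (Fin n), a ξ * 𝓕 f ξ =
          ∫ x : EuclideanSpace ℝ (Fin n), κ x * f x := by
  have hS : Sym m a := ⟨ha, hbound⟩
  obtain ⟨N, hN⟩ := exists_nat_gt (m + n)
  have hN' : m - 2 * N < -n := by
    have : (0 : ℝ) ≤ N := by positivity
    linarith
  refine ⟨ker a N, ?_, fun f hf hc hs => ⟨?_, ?_⟩⟩
  · rw [contDiffOn_infty]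
    intro k
    have h1 := ker_contDiffOn hS (N + k) k (by
      push_cast
      have : (0 : ℝ) ≤ k := by positivity
      linarith)
    exact h1.congr fun x hx => (ker_add hS N hN' hx k).symm
  · have := integrable_mul_schwartz hS (𝓕 (hc.toSchwartzMap hf))
    simp only [SchwartzMap.fourier_coe] at this
    exact this
  · obtain ⟨ψ, h1, h2⟩ := parts_iter N hS hf hc hs
    rw [h2]
    have h3 := VectorFourier.integral_fourierIntegral_smul_eq_flip (L := innerₗ _)
      (μ := volume) (ν := volume) Real.continuous_fourierChar continuous_inner
      ((hS.iter N).integrable hN') ψ.integrable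
    rw [flip_innerₗ] at h3
    simp only [SchwartzMap.fourier_coe]
    refine h3.symm.trans ?_
    congr 1
    ext x
    rw [h1, ker, smul_eq_mul, mul_left_comm, ← mul_assoc]
    rfl
end
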